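/- arXiv:2603.25211 — 2 statements merged into one kernel-verified Lean document; each statement's English description precedes it below -/
import Mathlib

section
/- (Available storage upper bound, Proposition 3.) For every admissible backlash trajectory (φ, I) and every T ≥ 0, the extracted energy satisfies −∫_0^T I(t)·φ'(t) dt ≤ S^a(φ(0)), where S^a : ℝ → ℝ is defined by S^a(ψ) = (ψ−h)²/(2L) for ψ > h, S^a(ψ) = (ψ+h)²/(2L) for ψ < −h, and S^a(ψ) = 0 for |ψ| ≤ h. -/
/-- A pair `(φ, I)` is an admissible backlash trajectory. -/
def AdmissibleBacklash (L h : ℝ) (φ I : ℝ → ℝ) : Prop :=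
  ContDiff ℝ 1 φ ∧
  ∀ t : ℝ, (0 < deriv φ t → I t = (φ t + h) / L) ∧
           (deriv φ t < 0 → I t = (φ t - h) / L)

/-- The available storage of the backlash inductor. -/
noncomputable def Sa (L h ψ : ℝ) : ℝ :=
  if h < ψ then (ψ - h) ^ 2 / (2 * L)
  else if ψ < -h then (ψ + h) ^ 2 / (2 * L)
  else 0

/-
Compare the current with that of a play-free inductor, `i = (x - c) / L` with a fixed offset
`|c| ≤ h`. Backlash puts the actual current at `(x + h) / L` when the flux `x` rises and at
`(x - h) / L` when it falls, so the supplied power `i * x'` is at least `(x - c) * x' / L`, the time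
derivative of `(x - c) ^ 2 / (2 * L)`. Each of these quadratics is therefore a storage function. The
available storage is their minimum over `c ∈ [-h, h]`, hence a nonnegative storage function itself,
and no more energy can be extracted than it initially holds.
-/

open MeasureTheory Set

/-- The constitutive law of a backlash inductor at a single instant, relating the flux `x`, its rate
of change `v` and the current `i`, which is left unconstrained while the flux is at rest. -/
def BacklashLaw (L h x v i : ℝ) : Prop :=
  (0 < v → i = (x + h) / L) ∧ (v < 0 → i = (x - h) / L)

section Backlash

variable {L h : ℝ}

namespace BacklashLaw

theorem mul_eq {x v i : ℝ} (hlaw : BacklashLaw L h x v i) : i * v = (x * v + h * |v|) / L := by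
  rcases lt_trichotomy v 0 with hv | rfl | hv
  · rw [hlaw.2 hv, abs_of_neg hv]
    ring
  · simp
  · rw [hlaw.1 hv, abs_of_pos hv]
    ring

theorem sub_mul_div_le_mul {x v i c : ℝ} (hL : 0 < L) (hlaw : BacklashLaw L h x v i)
    (hc : |c| ≤ h) : (x - c) * v / L ≤ i * v := by
  have hcv : -(c * v) ≤ h * |v| :=
    calc -(c * v) ≤ |c| * |v| := (neg_le_abs _).trans_eq (abs_mul c v)
      _ ≤ h * |v| := by gcongr
  rw [hlaw.mul_eq]
  gcongr
  linarith

end BacklashLaw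

theorem isLeast_Sa (hL : 0 < L) (hh : 0 ≤ h) (ψ : ℝ) :
    IsLeast ((fun c ↦ (ψ - c) ^ 2 / (2 * L)) '' Icc (-h) h) (Sa L h ψ) := by
  unfold Sa
  split_ifs with habove hbelow
  · refine ⟨⟨h, ⟨by linarith, le_rfl⟩, rfl⟩, forall_mem_image.2 fun c hc ↦ ?_⟩
    have : ψ - h ≤ ψ - c := by linarith [hc.2]
    have : 0 ≤ ψ - h := by linarith
    gcongr
  · refine ⟨⟨-h, ⟨le_rfl, by linarith⟩, by simp only [sub_neg_eq_add]⟩,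
      forall_mem_image.2 fun c hc ↦ ?_⟩
    have : |ψ + h| ≤ |ψ - c| := by
      rw [abs_of_neg (by linarith), abs_of_neg (by linarith [hc.1])]
      linarith [hc.1]
    gcongr ?_ / _
    exact sq_le_sq.2 this
  · exact ⟨⟨ψ, ⟨not_lt.1 hbelow, not_lt.1 habove⟩, by simp⟩,
      forall_mem_image.2 fun c _ ↦ by positivity⟩

theorem Sa_nonneg (hL : 0 < L) (ψ : ℝ) : 0 ≤ Sa L h ψ := by
  unfold Sa
  split_ifs <;> positivity

theorem integral_sub_const_mul_deriv {f : ℝ → ℝ} {a b : ℝ}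
    (hf : AbsolutelyContinuousOnInterval f a b) (c : ℝ) :
    ∫ t in a..b, (f t - c) * deriv f t = ((f b - c) ^ 2 - (f a - c) ^ 2) / 2 := by
  have hfc : AbsolutelyContinuousOnInterval (fun t ↦ f t - c) a b :=
    hf.fun_sub contDiffOn_const.absolutelyContinuousOnInterval
  have hparts := hfc.integral_mul_deriv_eq_deriv_mul hfc
  simp only [deriv_sub_const, mul_comm (deriv f _)] at hparts
  linarith

variable {φ I : ℝ → ℝ} {a b : ℝ}

theorem intervalIntegrable_mul_deriv_of_backlashLaw (hφ : AbsolutelyContinuousOnInterval φ a b)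
    (hlaw : ∀ᵐ t ∂volume.restrict (uIoc a b), BacklashLaw L h (φ t) (deriv φ t) (I t)) :
    IntervalIntegrable (fun t ↦ I t * deriv φ t) volume a b := by
  have hφ' := hφ.intervalIntegrable_deriv
  have hpower :
      IntervalIntegrable (fun t ↦ (φ t * deriv φ t + h * |deriv φ t|) / L) volume a b :=
    ((hφ'.continuousOn_mul hφ.continuousOn).add (hφ'.abs.const_mul h)).div_const L
  exact hpower.congr_ae (hlaw.mono fun t ht ↦ ht.mul_eq.symm)

theorem sq_sub_sq_div_le_integral_mul_deriv {c : ℝ} (hL : 0 < L) (hc : |c| ≤ h) (hab : a ≤ b)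
    (hφ : AbsolutelyContinuousOnInterval φ a b)
    (hlaw : ∀ᵐ t ∂volume.restrict (uIoc a b), BacklashLaw L h (φ t) (deriv φ t) (I t)) :
    (φ b - c) ^ 2 / (2 * L) - (φ a - c) ^ 2 / (2 * L) ≤ ∫ t in a..b, I t * deriv φ t := by
  have hint : IntervalIntegrable (fun t ↦ (φ t - c) * deriv φ t / L) volume a b :=
    (hφ.intervalIntegrable_deriv.continuousOn_mul
      (hφ.continuousOn.sub continuousOn_const)).div_const L
  have hle : ∀ᵐ t ∂volume.restrict (Icc a b), (φ t - c) * deriv φ t / L ≤ I t * deriv φ t := by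
    rw [← restrict_Ioc_eq_restrict_Icc, ← uIoc_of_le hab]
    exact hlaw.mono fun t ht ↦ ht.sub_mul_div_le_mul hL hc
  calc (φ b - c) ^ 2 / (2 * L) - (φ a - c) ^ 2 / (2 * L)
      = ∫ t in a..b, (φ t - c) * deriv φ t / L := by
        rw [intervalIntegral.integral_div, integral_sub_const_mul_deriv hφ]
        ring
    _ ≤ ∫ t in a..b, I t * deriv φ t :=
        intervalIntegral.integral_mono_ae_restrict hab hint
          (intervalIntegrable_mul_deriv_of_backlashLaw hφ hlaw) hle

theorem stmt9_general (hL : 0 < L) (hh : 0 ≤ h) (hab : a ≤ b)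
    (hφ : AbsolutelyContinuousOnInterval φ a b)
    (hlaw : ∀ᵐ t ∂volume.restrict (uIoc a b), BacklashLaw L h (φ t) (deriv φ t) (I t)) :
    -∫ t in a..b, I t * deriv φ t ≤ Sa L h (φ a) - Sa L h (φ b) := by
  obtain ⟨c, hc, hSa : (φ a - c) ^ 2 / (2 * L) = Sa L h (φ a)⟩ := (isLeast_Sa hL hh (φ a)).1
  have hSb : Sa L h (φ b) ≤ (φ b - c) ^ 2 / (2 * L) :=
    (isLeast_Sa hL hh (φ b)).2 (mem_image_of_mem _ hc)
  have hdiss := sq_sub_sq_div_le_integral_mul_deriv hL (abs_le.2 hc) hab hφ hlaw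
  linarith

end Backlash

theorem stmt9 (L h : ℝ) (hL : 0 < L) (hh : 0 ≤ h)
    (φ I : ℝ → ℝ) (hadm : AdmissibleBacklash L h φ I)
    (T : ℝ) (hT : 0 ≤ T) :
    -∫ t in (0 : ℝ)..T, I t * deriv φ t ≤ Sa L h (φ 0) :=
  (stmt9_general hL hh hT hadm.1.contDiffOn.absolutelyContinuousOnInterval
    (.of_forall hadm.2)).trans (sub_le_self _ (Sa_nonneg hL _))
end

section
/- (No energy extraction from the ground state.) For every admissible backlash trajectory (φ, I) with |φ(0)| ≤ h and every T ≥ 0, one has −∫_0^T I(t)·φ'(t) dt ≤ 0; that is, no energy can be extracted starting from a ground state. -/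
/-!
Along a trajectory the power is `I φ' = (φ φ' + h |φ'|) / L`, so the energy absorbed on `[a, b]` is
`((φ b ^ 2 - φ a ^ 2) / 2 + h ∫ |φ'|) / L`, where the total variation `∫ |φ'|` is at least
`|φ b - φ a|`. Let `S x = dist (x, [-h, h]) ^ 2 / (2 * L)`. If `p` is the point of `[-h, h]` nearest
to `x`, then `L * (S y - S x) ≤ ((y - p) ^ 2 - (x - p) ^ 2) / 2`, which is at most
`(y ^ 2 - x ^ 2) / 2 + h |y - x|` since `|p| ≤ h`. Hence the absorbed energy is at least
`S (φ b) - S (φ a)`. Since `S ≥ 0`, at most `S (φ a)` can be extracted, and `S` vanishes on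
ground states.
-/

open MeasureTheory Set

section AbsolutelyContinuous

variable {f : ℝ → ℝ} {a b : ℝ}

theorem integral_mul_deriv_self (hf : AbsolutelyContinuousOnInterval f a b) :
    ∫ t in a..b, f t * deriv f t = (f b ^ 2 - f a ^ 2) / 2 := by
  have parts := hf.integral_mul_deriv_eq_deriv_mul hf
  simp only [mul_comm (deriv f _)] at parts
  linarith

theorem abs_sub_le_integral_abs_deriv (hf : AbsolutelyContinuousOnInterval f a b) (hab : a ≤ b) :
    |f b - f a| ≤ ∫ t in a..b, |deriv f t| := by
  rw [← hf.integral_deriv_eq_sub]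
  exact intervalIntegral.abs_integral_le_integral_abs hab

end AbsolutelyContinuous

/-- The backlash law at time `t`: the current `I` lies on the upper branch `(φ + h) / L` when the
flux `φ` increases and on the lower branch `(φ - h) / L` when it decreases. It says nothing about
`I t` when `deriv φ t = 0`, in particular when `φ` is not differentiable at `t`. -/
def BacklashLawAt (L h : ℝ) (φ I : ℝ → ℝ) (t : ℝ) : Prop :=
  (0 < deriv φ t → I t = (φ t + h) / L) ∧ (deriv φ t < 0 → I t = (φ t - h) / L)

/-- Backlash trajectories of finite duration and low regularity: `φ` is absolutely continuous on
the interval with endpoints `a` and `b`, and the backlash law holds almost everywhere there. -/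
def AdmissibleBacklashOn (L h : ℝ) (φ I : ℝ → ℝ) (a b : ℝ) : Prop :=
  AbsolutelyContinuousOnInterval φ a b ∧ ∀ᵐ t, t ∈ uIoc a b → BacklashLawAt L h φ I t

/-- A bound for the energy extractable from a backlash element at flux `x`: the squared distance
from `x` to the interval `[-h, h]` of ground states, divided by `2 * L`. For `h < 0` the interval is
empty and the value is `0`. -/
noncomputable def backlashStorage (L h x : ℝ) : ℝ :=
  Metric.infDist x (Icc (-h) h) ^ 2 / (2 * L)

section Backlash

variable {L h : ℝ} {φ I : ℝ → ℝ} {a b t x y : ℝ}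

theorem backlashStorage_nonneg (hL : 0 ≤ L) : 0 ≤ backlashStorage L h x := by
  unfold backlashStorage
  positivity

theorem backlashStorage_eq_zero (hx : |x| ≤ h) : backlashStorage L h x = 0 := by
  simp [backlashStorage, Metric.infDist_zero_of_mem (show x ∈ Icc (-h) h from abs_le.mp hx)]

theorem sq_infDist_Icc_sub_le (hh : 0 ≤ h) :
    Metric.infDist y (Icc (-h) h) ^ 2 - Metric.infDist x (Icc (-h) h) ^ 2 ≤
      y ^ 2 - x ^ 2 + 2 * h * |y - x| := by
  obtain ⟨p, hp, hxp⟩ :=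
    isCompact_Icc.exists_infDist_eq_dist (nonempty_Icc.mpr (neg_le_self hh)) x
  have y_le : Metric.infDist y (Icc (-h) h) ≤ dist y p := Metric.infDist_le_dist_of_mem hp
  have cross : -(p * (y - x)) ≤ h * |y - x| :=
    calc -(p * (y - x)) ≤ |p| * |y - x| := abs_mul p (y - x) ▸ neg_le_abs _
      _ ≤ h * |y - x| := by gcongr; exact abs_le.mpr hp
  calc Metric.infDist y (Icc (-h) h) ^ 2 - Metric.infDist x (Icc (-h) h) ^ 2
      ≤ dist y p ^ 2 - dist x p ^ 2 := by
        rw [hxp]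
        gcongr
        exact Metric.infDist_nonneg
    _ = y ^ 2 - x ^ 2 + 2 * -(p * (y - x)) := by
        simp only [Real.dist_eq, sq_abs]; ring
    _ ≤ y ^ 2 - x ^ 2 + 2 * h * |y - x| := by linarith

theorem backlashStorage_sub_le (hL : 0 ≤ L) (hh : 0 ≤ h) :
    backlashStorage L h y - backlashStorage L h x ≤ ((y ^ 2 - x ^ 2) / 2 + h * |y - x|) / L := by
  calc backlashStorage L h y - backlashStorage L h x
      = (Metric.infDist y (Icc (-h) h) ^ 2 - Metric.infDist x (Icc (-h) h) ^ 2) / 2 / L := by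
        simp only [backlashStorage]; ring
    _ ≤ ((y ^ 2 - x ^ 2) / 2 + h * |y - x|) / L := by
        gcongr
        linarith [sq_infDist_Icc_sub_le (x := x) (y := y) hh]

theorem BacklashLawAt.mul_deriv_eq (hlaw : BacklashLawAt L h φ I t) :
    I t * deriv φ t = (φ t * deriv φ t + h * |deriv φ t|) / L := by
  rcases lt_trichotomy (deriv φ t) 0 with hneg | hzero | hpos
  · rw [hlaw.2 hneg, abs_of_neg hneg]; ring
  · simp [hzero]
  · rw [hlaw.1 hpos, abs_of_pos hpos]; ring

theorem AdmissibleBacklashOn.integral_mul_deriv_eq (hadm : AdmissibleBacklashOn L h φ I a b) :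
    ∫ t in a..b, I t * deriv φ t =
      ((φ b ^ 2 - φ a ^ 2) / 2 + h * ∫ t in a..b, |deriv φ t|) / L := by
  obtain ⟨hφ, hlaw⟩ := hadm
  have hφ' : IntervalIntegrable (deriv φ) volume a b := hφ.intervalIntegrable_deriv
  calc ∫ t in a..b, I t * deriv φ t
      = ∫ t in a..b, (φ t * deriv φ t + h * |deriv φ t|) / L :=
        intervalIntegral.integral_congr_ae (hlaw.mono fun _ ht hmem => (ht hmem).mul_deriv_eq)
    _ = ((φ b ^ 2 - φ a ^ 2) / 2 + h * ∫ t in a..b, |deriv φ t|) / L := by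
        rw [intervalIntegral.integral_div,
          intervalIntegral.integral_add (hφ'.continuousOn_mul hφ.continuousOn)
            (hφ'.abs.const_mul h),
          intervalIntegral.integral_const_mul, integral_mul_deriv_self hφ]

theorem AdmissibleBacklash.admissibleBacklashOn (hadm : AdmissibleBacklash L h φ I) (a b : ℝ) :
    AdmissibleBacklashOn L h φ I a b :=
  ⟨hadm.1.contDiffOn.absolutelyContinuousOnInterval, .of_forall fun t _ => hadm.2 t⟩

theorem stmt10_general (hL : 0 < L) (hh : 0 ≤ h) (hab : a ≤ b)
    (hadm : AdmissibleBacklashOn L h φ I a b) :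
    -∫ t in a..b, I t * deriv φ t ≤ backlashStorage L h (φ a) - backlashStorage L h (φ b) := by
  rw [neg_le, neg_sub]
  calc backlashStorage L h (φ b) - backlashStorage L h (φ a)
      ≤ ((φ b ^ 2 - φ a ^ 2) / 2 + h * |φ b - φ a|) / L := backlashStorage_sub_le hL.le hh
    _ ≤ ((φ b ^ 2 - φ a ^ 2) / 2 + h * ∫ t in a..b, |deriv φ t|) / L := by
        gcongr
        exact abs_sub_le_integral_abs_deriv hadm.1 hab
    _ = ∫ t in a..b, I t * deriv φ t := hadm.integral_mul_deriv_eq.symm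

end Backlash

theorem stmt10 (L h : ℝ) (hL : 0 < L) (hh : 0 ≤ h)
    (φ I : ℝ → ℝ) (hadm : AdmissibleBacklash L h φ I)
    (hground : |φ 0| ≤ h) (T : ℝ) (hT : 0 ≤ T) :
    -∫ t in (0 : ℝ)..T, I t * deriv φ t ≤ 0 := by
  linarith [stmt10_general hL hh hT (hadm.admissibleBacklashOn 0 T),
    backlashStorage_eq_zero (L := L) hground, backlashStorage_nonneg (h := h) (x := φ T) hL.le]
end
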